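/- Let ρ_ABC be a density matrix (positive semidefinite with trace 1) on the tensor product of finite-dimensional complex Hilbert spaces H_A ⊗ H_B ⊗ H_C. Then for every α ∈ (0,1), Tr{ ( ρ_AC^{(1−α)/2} ρ_C^{(α−1)/2} ρ_BC^{1−α} ρ_C^{(α−1)/2} ρ_AC^{(1−α)/2} )^{1/(1−α)} } ≤ 1. -/

import Mathlib

open scoped ComplexOrder Matrix

/-- Real power of a Hermitian matrix, taken on its support:
for `A = ∑ᵢ λᵢ |i⟩⟨i|`, `mpow A t = ∑_{i : λᵢ ≠ 0} λᵢ^t |i⟩⟨i|`.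
(For non-Hermitian input we return the junk value `0`.) -/
noncomputable def mpow {n : Type*} [Fintype n] [DecidableEq n]
    (A : Matrix n n ℂ) (t : ℝ) : Matrix n n ℂ :=
  if h : A.IsHermitian then
    (h.eigenvectorUnitary : Matrix n n ℂ) *
      Matrix.diagonal (fun i => ((if h.eigenvalues i = 0 then (0:ℝ)
        else (h.eigenvalues i) ^ t) : ℂ)) *
      (star h.eigenvectorUnitary : Matrix n n ℂ)
  else 0

/-- The reduced matrix `ρ_AC` of a tripartite matrix, viewed as the operator
`ρ_AC ⊗ I_B` on the full space. -/
noncomputable def redAC {dA dB dC : ℕ}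
    (ρ : Matrix (Fin dA × Fin dB × Fin dC) (Fin dA × Fin dB × Fin dC) ℂ) :
    Matrix (Fin dA × Fin dB × Fin dC) (Fin dA × Fin dB × Fin dC) ℂ :=
  fun x y => (if x.2.1 = y.2.1 then (1:ℂ) else 0) *
    ∑ m : Fin dB, ρ (x.1, m, x.2.2) (y.1, m, y.2.2)

/-- The reduced matrix `ρ_BC` of a tripartite matrix, viewed as the operator
`I_A ⊗ ρ_BC` on the full space. -/
noncomputable def redBC {dA dB dC : ℕ}
    (ρ : Matrix (Fin dA × Fin dB × Fin dC) (Fin dA × Fin dB × Fin dC) ℂ) :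
    Matrix (Fin dA × Fin dB × Fin dC) (Fin dA × Fin dB × Fin dC) ℂ :=
  fun x y => (if x.1 = y.1 then (1:ℂ) else 0) * ∑ m : Fin dA, ρ (m, x.2) (m, y.2)

/-- The reduced matrix `ρ_C` of a tripartite matrix, viewed as the operator
`I_A ⊗ I_B ⊗ ρ_C` on the full space. -/
noncomputable def redC {dA dB dC : ℕ}
    (ρ : Matrix (Fin dA × Fin dB × Fin dC) (Fin dA × Fin dB × Fin dC) ℂ) :
    Matrix (Fin dA × Fin dB × Fin dC) (Fin dA × Fin dB × Fin dC) ℂ :=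
  fun x y => (if x.1 = y.1 then (1:ℂ) else 0) * (if x.2.1 = y.2.1 then (1:ℂ) else 0) *
    ∑ m : Fin dA, ∑ l : Fin dB, ρ (m, l, x.2.2) (m, l, y.2.2)

/-!
The bound is Stein interpolation applied to the analytic family
`G z = ρ_BC ^ (z / 2) ρ_C ^ (-z / 2) ρ_AC ^ (z / 2)`: the operator on the left-hand side is
`((G s)ᴴ * G s) ^ (1 / s)` with `s = 1 - α`. On the line `re z = 0` the powers are partial
isometries, so `‖G z‖ ≤ 1`. On the line `re z = 1` the squared Hilbert–Schmidt norm of `G z`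
involves `ρ_AC` and `ρ_BC` only linearly, so both can be traced out to `ρ_C`, and the powers of
`ρ_C` then collapse to `tr ρ_C`. Interpolating between the two lines bounds
`tr ((G s)ᴴ * G s) ^ (1 / s)`, the Schatten `2 / s` norm of `G s` to the power `2 / s`, by `tr ρ_C`.
-/

open scoped Kronecker Matrix.Norms.L2Operator

section ComplexPowers

variable {m n : Type*} [Fintype m] [Fintype n] [DecidableEq m] [DecidableEq n]
  {A : Matrix n n ℂ} {x z : ℂ}

/-- The complex power `x ^ z` supported away from `0`: it vanishes at `x = 0` for every `z`,
unlike `Complex.cpow`, for which `0 ^ 0 = 1`. -/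
noncomputable def supportCpow (x z : ℂ) : ℂ := if x = 0 then 0 else x ^ z

lemma supportCpow_add (x z w : ℂ) :
    supportCpow x (z + w) = supportCpow x z * supportCpow x w := by
  unfold supportCpow
  split_ifs with hx
  · simp
  · exact Complex.cpow_add z w hx

lemma star_supportCpow (hx : 0 ≤ x) (z : ℂ) : star (supportCpow x z) = supportCpow x (star z) := by
  obtain ⟨r, hr, rfl⟩ := RCLike.nonneg_iff_exists_ofReal.mp hx
  have harg : (r : ℂ).arg ≠ Real.pi := by
    rw [Complex.arg_ofReal_of_nonneg hr]
    exact Real.pi_pos.ne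
  have h := Complex.cpow_conj (r : ℂ) z harg
  rw [Complex.conj_ofReal] at h
  unfold supportCpow
  split_ifs
  · exact star_zero _
  · exact h.symm

lemma norm_supportCpow_le_one (hx : 0 ≤ x) (hz : z.re = 0) : ‖supportCpow x z‖ ≤ 1 := by
  unfold supportCpow
  split_ifs with hx0
  · simp
  · obtain ⟨r, hr, rfl⟩ := RCLike.pos_iff_exists_ofReal.mp (lt_of_le_of_ne' hx hx0)
    simp [Complex.norm_cpow_eq_rpow_re_of_pos hr, hz]

/-- The complex power of a normal matrix, taken on its support. For positive semidefinite `A` and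
real exponent this is `mpow A`. -/
noncomputable def mcpow (A : Matrix n n ℂ) (z : ℂ) : Matrix n n ℂ :=
  cfc (fun x ↦ supportCpow x z) A

lemma continuousOn_spectrum (A : Matrix n n ℂ) (f : ℂ → ℂ) : ContinuousOn f (spectrum ℂ A) :=
  A.finite_spectrum.continuousOn f

lemma mcpow_add (A : Matrix n n ℂ) (z w : ℂ) : mcpow A (z + w) = mcpow A z * mcpow A w := by
  rw [mcpow, mcpow, mcpow, ← cfc_mul _ _ A (continuousOn_spectrum A _) (continuousOn_spectrum A _)]
  simp only [supportCpow_add]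

lemma mcpow_one (hA : A.IsHermitian) : mcpow A 1 = A := by
  have : IsStarNormal A := hA.isSelfAdjoint.isStarNormal
  conv_rhs => rw [← cfc_id ℂ A]
  exact cfc_congr fun x _ ↦ by simp +contextual [supportCpow, eq_comm]

lemma mcpow_map (φ : Matrix m m ℂ →⋆ₐ[ℂ] Matrix n n ℂ) {A : Matrix m m ℂ} (hA : A.IsHermitian)
    (z : ℂ) : mcpow (φ A) z = φ (mcpow A z) := by
  have : IsStarNormal A := hA.isSelfAdjoint.isStarNormal
  exact (StarAlgHom.map_cfc φ (fun x ↦ supportCpow x z) A (continuousOn_spectrum A _)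
    φ.toAlgHom.toLinearMap.continuous_of_finiteDimensional).symm

lemma nonneg_of_mem_spectrum (hA : A.PosSemidef) (hx : x ∈ spectrum ℂ A) : 0 ≤ x :=
  (Matrix.posSemidef_iff_isHermitian_and_spectrum_nonneg.mp hA).2 hx

lemma conjTranspose_mcpow (hA : A.PosSemidef) (z : ℂ) : (mcpow A z)ᴴ = mcpow A (star z) := by
  rw [← Matrix.star_eq_conjTranspose, mcpow, mcpow, ← cfc_star]
  exact cfc_congr fun x hx ↦ star_supportCpow (nonneg_of_mem_spectrum hA hx) z

lemma norm_mcpow_le_one (hA : A.PosSemidef) (hz : z.re = 0) : ‖mcpow A z‖ ≤ 1 :=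
  norm_cfc_le zero_le_one fun _ hx ↦
    norm_supportCpow_le_one (nonneg_of_mem_spectrum hA hx) hz

lemma supportCpow_ofReal {r : ℝ} (hr : 0 ≤ r) (t : ℝ) :
    supportCpow r t = ((if r = 0 then 0 else r ^ t : ℝ) : ℂ) := by
  simp only [supportCpow, Complex.ofReal_eq_zero]
  split_ifs <;> simp [Complex.ofReal_cpow hr]

-- For a real exponent the power of a complex number elaborates, here and in `mpow`, to `CFC.rpow`.
lemma ofReal_cfcRpow {r : ℝ} (hr : 0 ≤ r) (t : ℝ) : (r : ℂ) ^ t = ((r ^ t : ℝ) : ℂ) := by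
  lift r to NNReal using hr
  exact CFC.rpow_algebraMap

lemma mpow_eq_cfc (hA : A.PosSemidef) (t : ℝ) :
    mpow A t = cfc (fun r : ℝ ↦ if r = 0 then 0 else r ^ t) A := by
  rw [hA.isHermitian.cfc_eq, mpow, dif_pos hA.isHermitian, Matrix.IsHermitian.cfc,
    Unitary.conjStarAlgAut_apply]
  congr! 4 with i
  simp only [ofReal_cfcRpow (hA.eigenvalues_nonneg i), Function.comp_apply, Complex.coe_algebraMap]
  split_ifs <;> simp

lemma mpow_eq_mcpow (hA : A.PosSemidef) (t : ℝ) : mpow A t = mcpow A t := by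
  rw [mpow_eq_cfc hA, mcpow, cfc_real_eq_complex _ hA.isHermitian.isSelfAdjoint]
  refine cfc_congr fun x hx ↦ ?_
  obtain ⟨r, hr, rfl⟩ := RCLike.nonneg_iff_exists_ofReal.mp (nonneg_of_mem_spectrum hA hx)
  exact (supportCpow_ofReal hr t).symm

lemma cfc_eq_sum_spectrum (A : Matrix n n ℂ) (f : ℂ → ℂ) :
    cfc f A = ∑ x ∈ A.finite_spectrum.toFinset, f x • cfc (Pi.single x 1 : ℂ → ℂ) A := by
  simp only [← cfc_smul _ _ A (continuousOn_spectrum A _)]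
  rw [← cfc_sum _ _ _ fun _ _ ↦ continuousOn_spectrum A _]
  refine cfc_congr fun x hx ↦ ?_
  simp [Finset.sum_apply, Pi.single_apply, hx]

end ComplexPowers

section AdmissibleFamilies

open Complex.HadamardThreeLines

/-- A family entire in the parameter and bounded on the strip `0 ≤ re z ≤ 1`, as the three lines
theorem requires. -/
structure IsStripAdmissible {E : Type*} [NormedAddCommGroup E] [NormedSpace ℂ E] (f : ℂ → E) :
    Prop where
  differentiable : Differentiable ℂ f
  bounded : ∃ K : ℝ, ∀ z ∈ verticalClosedStrip 0 1, ‖f z‖ ≤ K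

namespace IsStripAdmissible

variable {E F R : Type*} [NormedAddCommGroup E] [NormedSpace ℂ E] [NormedAddCommGroup F]
  [NormedSpace ℂ F] [NormedRing R] [NormedAlgebra ℂ R]

lemma const (c : E) : IsStripAdmissible fun _ ↦ c :=
  ⟨differentiable_const c, ‖c‖, fun _ _ ↦ le_rfl⟩

lemma clm_comp {f : ℂ → E} (hf : IsStripAdmissible f) (L : E →L[ℂ] F) :
    IsStripAdmissible fun z ↦ L (f z) := by
  obtain ⟨K, hK⟩ := hf.bounded
  exact ⟨L.differentiable.comp hf.differentiable, ‖L‖ * K, fun z hz ↦ L.le_opNorm_of_le (hK z hz)⟩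

lemma mul {f g : ℂ → R} (hf : IsStripAdmissible f) (hg : IsStripAdmissible g) :
    IsStripAdmissible fun z ↦ f z * g z := by
  obtain ⟨K, hK⟩ := hf.bounded
  obtain ⟨L, hL⟩ := hg.bounded
  exact ⟨hf.differentiable.mul hg.differentiable, K * L,
    fun z hz ↦ norm_mul_le_of_le (hK z hz) (hL z hz)⟩

lemma sum {ι : Type*} {s : Finset ι} {f : ι → ℂ → E} (hf : ∀ i ∈ s, IsStripAdmissible (f i)) :
    IsStripAdmissible fun z ↦ ∑ i ∈ s, f i z := by
  choose! K hK using fun i hi ↦ (hf i hi).bounded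
  exact ⟨Differentiable.fun_sum fun i hi ↦ (hf i hi).differentiable, ∑ i ∈ s, K i,
    fun z hz ↦ norm_sum_le_of_le s fun i hi ↦ hK i hi z hz⟩

lemma supportCpow {x : ℂ} (hx : 0 ≤ x) (a : ℝ) (b : ℂ) :
    IsStripAdmissible fun z ↦ supportCpow x (a * z + b) := by
  unfold _root_.supportCpow
  split_ifs with hx0
  · exact const 0
  obtain ⟨r, hr, rfl⟩ := RCLike.pos_iff_exists_ofReal.mp (lt_of_le_of_ne' hx hx0)
  refine ⟨fun z ↦ DifferentiableAt.const_cpow (by fun_prop) (.inl hx0), ?_⟩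
  have hcont : Continuous fun t : ℝ ↦ r ^ (a * t + b.re) :=
    (Real.continuous_const_rpow hr.ne').comp (by fun_prop)
  obtain ⟨K, hK⟩ := isCompact_Icc.exists_bound_of_continuousOn (s := Set.Icc 0 1) hcont.continuousOn
  refine ⟨K, fun z hz ↦ (le_of_eq ?_).trans (hK z.re hz)⟩
  rw [Real.norm_of_nonneg (Real.rpow_nonneg hr.le _)]
  simpa using Complex.norm_cpow_eq_rpow_re_of_pos hr (a * z + b)

lemma mcpow {n : Type*} [Fintype n] [DecidableEq n] {A : Matrix n n ℂ} (hA : A.PosSemidef)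
    (a : ℝ) (b : ℂ) : IsStripAdmissible fun z ↦ mcpow A (a * z + b) := by
  have hsum (w : ℂ) : _root_.mcpow A w = _ := cfc_eq_sum_spectrum A fun x ↦ _root_.supportCpow x w
  simp only [hsum]
  refine sum fun x hx ↦ (supportCpow (nonneg_of_mem_spectrum hA ?_) a b).clm_comp
    (.toSpanSingleton ℂ (cfc (Pi.single x 1 : ℂ → ℂ) A))
  simpa using hx

lemma matrix_trace {n : Type*} [Fintype n] [DecidableEq n] {G : ℂ → Matrix n n ℂ}
    (hG : IsStripAdmissible G) : IsStripAdmissible fun z ↦ (G z).trace :=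
  hG.clm_comp (LinearMap.toContinuousLinearMap (Matrix.traceLinearMap n ℂ ℂ))

lemma norm_le_rpow_mul_rpow {f : ℂ → E} (hf : IsStripAdmissible f) {K L s : ℝ}
    (hK : ∀ z : ℂ, z.re = 0 → ‖f z‖ ≤ K) (hL : ∀ z : ℂ, z.re = 1 → ‖f z‖ ≤ L)
    (hs : s ∈ Set.Icc 0 1) : ‖f s‖ ≤ K ^ (1 - s) * L ^ s :=
  norm_le_interp_of_mem_verticalClosedStrip₀₁' f (z := s) hs hf.differentiable.diffContOnCl
    (by simpa [bddAbove_def] using hf.bounded) hK hL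

end IsStripAdmissible

end AdmissibleFamilies

section HilbertSchmidt

variable {m n : Type*} [Fintype m] [Fintype n]

/-- The square of the Hilbert–Schmidt norm, written out so that `‖X‖` can stay the operator
norm. -/
noncomputable def hsNormSq (X : Matrix m n ℂ) : ℝ := ∑ i, ∑ j, ‖X i j‖ ^ 2

lemma hsNormSq_nonneg (X : Matrix m n ℂ) : 0 ≤ hsNormSq X := by
  unfold hsNormSq
  positivity

lemma hsNormSq_conjTranspose (X : Matrix m n ℂ) : hsNormSq Xᴴ = hsNormSq X := by
  rw [hsNormSq, hsNormSq, Finset.sum_comm]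
  simp only [Matrix.conjTranspose_apply, norm_star]

lemma trace_conjTranspose_mul_self (X : Matrix m n ℂ) : (Xᴴ * X).trace = hsNormSq X := by
  simp only [Matrix.trace, Matrix.diag, Matrix.mul_apply, hsNormSq, Matrix.conjTranspose_apply]
  rw [Finset.sum_comm]
  push_cast
  exact Finset.sum_congr rfl fun i _ ↦ Finset.sum_congr rfl fun j _ ↦ Complex.conj_mul' _

lemma norm_trace_mul_sq_le (X : Matrix m n ℂ) (Y : Matrix n m ℂ) :
    ‖(X * Y).trace‖ ^ 2 ≤ hsNormSq X * hsNormSq Y := by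
  have htriangle : ‖(X * Y).trace‖ ≤ ∑ p : m × n, ‖X p.1 p.2‖ * ‖Y p.2 p.1‖ := by
    simp only [Matrix.trace, Matrix.diag, Matrix.mul_apply, Fintype.sum_prod_type, ← norm_mul]
    exact norm_sum_le_of_le _ fun i _ ↦ norm_sum_le _ _
  calc
    ‖(X * Y).trace‖ ^ 2 ≤ (∑ p : m × n, ‖X p.1 p.2‖ * ‖Y p.2 p.1‖) ^ 2 := by gcongr
    _ ≤ (∑ p : m × n, ‖X p.1 p.2‖ ^ 2) * ∑ p : m × n, ‖Y p.2 p.1‖ ^ 2 :=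
      Finset.sum_mul_sq_le_sq_mul_sq _ _ _
    _ = hsNormSq X * hsNormSq Y := by
      rw [← hsNormSq_conjTranspose Y]
      simp [hsNormSq, Fintype.sum_prod_type]

lemma norm_trace_mul_le {X : Matrix m n ℂ} {Y : Matrix n m ℂ} {K L : ℝ} (hX : hsNormSq X ≤ K)
    (hY : hsNormSq Y ≤ L) : ‖(X * Y).trace‖ ≤ √(K * L) :=
  Real.le_sqrt_of_sq_le <| (norm_trace_mul_sq_le X Y).trans <|
    mul_le_mul hX hY (hsNormSq_nonneg Y) ((hsNormSq_nonneg X).trans hX)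

lemma hsNormSq_mul_le {l : Type*} [Fintype l] [DecidableEq m] {C : Matrix l m ℂ} (hC : ‖C‖ ≤ 1)
    (X : Matrix m n ℂ) : hsNormSq (C * X) ≤ hsNormSq X := by
  have hcol (j : n) : ∑ i, ‖(C * X) i j‖ ^ 2 ≤ ∑ i, ‖X i j‖ ^ 2 := by
    set v : EuclideanSpace ℂ m := WithLp.toLp 2 fun i ↦ X i j
    have h := (Matrix.l2_opNorm_mulVec C v).trans (mul_le_of_le_one_left (norm_nonneg _) hC)
    have hsq := pow_le_pow_left₀ (norm_nonneg _) h 2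
    rwa [EuclideanSpace.norm_sq_eq, EuclideanSpace.norm_sq_eq] at hsq
  rw [hsNormSq, hsNormSq, Finset.sum_comm, Finset.sum_comm (s := Finset.univ (α := m))]
  exact Finset.sum_le_sum fun j _ ↦ hcol j

variable [DecidableEq n]

lemma trace_mcpow_two_mul_re {A : Matrix n n ℂ} (hA : A.PosSemidef) (w : ℂ) :
    (mcpow A ((2 * w.re : ℝ) : ℂ)).trace = hsNormSq (mcpow A w) := by
  rw [← trace_conjTranspose_mul_self, conjTranspose_mcpow hA, ← mcpow_add]
  congr 2
  rw [add_comm]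
  exact (Complex.add_conj w).symm

lemma hsNormSq_mcpow_congr {A : Matrix n n ℂ} (hA : A.PosSemidef) {v w : ℂ} (h : v.re = w.re) :
    hsNormSq (mcpow A v) = hsNormSq (mcpow A w) := by
  have := trace_mcpow_two_mul_re hA v
  rw [h, trace_mcpow_two_mul_re hA] at this
  exact_mod_cast this.symm

lemma hsNormSq_mcpow_mul_conjTranspose (Y : Matrix m n ℂ) (w : ℂ) :
    hsNormSq (mcpow (Yᴴ * Y) w * Yᴴ) = hsNormSq (mcpow (Yᴴ * Y) (w + 1 / 2)) := by
  have hM := Matrix.posSemidef_conjTranspose_mul_self Y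
  set M := Yᴴ * Y with hMY
  suffices h : ((hsNormSq (mcpow M w * Yᴴ) : ℝ) : ℂ) = hsNormSq (mcpow M (w + 1 / 2)) by
    exact_mod_cast h
  have hexp : w + 1 + star w = star (w + 1 / 2) + (w + 1 / 2) := by
    simp only [star_add, Complex.star_def, map_div₀, map_one, map_ofNat]
    ring
  calc
    ((hsNormSq (mcpow M w * Yᴴ) : ℝ) : ℂ) = (mcpow M w * M * mcpow M (star w)).trace := by
      rw [← hsNormSq_conjTranspose, ← trace_conjTranspose_mul_self,
        Matrix.conjTranspose_conjTranspose, Matrix.conjTranspose_mul, conjTranspose_mcpow hM,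
        Matrix.conjTranspose_conjTranspose, hMY]
      simp only [Matrix.mul_assoc]
    _ = (mcpow M (w + 1 + star w)).trace := by
      rw [mcpow_add, mcpow_add, mcpow_one hM.isHermitian]
    _ = hsNormSq (mcpow M (w + 1 / 2)) := by
      rw [hexp, mcpow_add, ← conjTranspose_mcpow hM, trace_conjTranspose_mul_self]

end HilbertSchmidt

section Interpolation

variable {m n : Type*} [Fintype m] [Fintype n] [DecidableEq n]

/-- The extremal analytic family for the Schatten duality pairing with `Y`: its exponents are
chosen so that pairing `Y` with its value at `z = s` gives `tr |Y| ^ (2 / s)`. -/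
noncomputable def dualFamily (Y : Matrix m n ℂ) (s : ℝ) (z : ℂ) : Matrix n m ℂ :=
  mcpow (Yᴴ * Y) ((2 - z) / (2 * s : ℝ) - 1 / 2) * Yᴴ

lemma trace_dualFamily_mul_self (Y : Matrix m n ℂ) {s : ℝ} (hs : s ≠ 0) :
    (dualFamily Y s s * Y).trace = hsNormSq (mcpow (Yᴴ * Y) (1 / (2 * s) : ℝ)) := by
  have hM := Matrix.posSemidef_conjTranspose_mul_self Y
  set M := Yᴴ * Y with hMY
  have hexp : (2 - (s : ℂ)) / (2 * s : ℝ) - 1 / 2 + 1 =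
      (2 * (((1 / (2 * s) : ℝ) : ℂ)).re : ℝ) := by
    rw [Complex.ofReal_re]
    push_cast
    field_simp
    ring
  rw [dualFamily, Matrix.mul_assoc, ← hMY]
  nth_rw 2 [← mcpow_one hM.isHermitian]
  rw [← mcpow_add, hexp, trace_mcpow_two_mul_re hM]

lemma norm_trace_dualFamily_mul_le_of_re_eq_zero (Y : Matrix m n ℂ) (s : ℝ) {z : ℂ}
    (hz : z.re = 0) {X : Matrix m n ℂ} (hX : ‖X‖ ≤ 1) :
    ‖(dualFamily Y s z * X).trace‖ ≤ hsNormSq (mcpow (Yᴴ * Y) (1 / (2 * s) : ℝ)) := by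
  have hM := Matrix.posSemidef_conjTranspose_mul_self Y
  set M := Yᴴ * Y
  set u : ℂ := ((1 / (2 * s) : ℝ) : ℂ)
  set e : ℂ := (2 - z) / (2 * s : ℝ)
  have hsplit : dualFamily Y s z = mcpow M u * (mcpow M (e - u - 1 / 2) * Yᴴ) := by
    rw [← Matrix.mul_assoc, ← mcpow_add, dualFamily]
    congr 2
    ring
  have hdual : hsNormSq (mcpow M (e - u - 1 / 2) * Yᴴ) = hsNormSq (mcpow M u) := by
    rw [hsNormSq_mcpow_mul_conjTranspose, sub_add_cancel]
    refine hsNormSq_mcpow_congr hM ?_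
    simp only [e, u, Complex.sub_re, Complex.div_ofReal_re, Complex.ofReal_re, hz, Complex.re_ofNat]
    ring
  rw [hsplit, Matrix.mul_assoc, Matrix.trace_mul_comm, Matrix.mul_assoc]
  refine (norm_trace_mul_le hdual.le (hsNormSq_mul_le hX _)).trans_eq ?_
  exact Real.sqrt_mul_self (hsNormSq_nonneg _)

lemma norm_trace_dualFamily_mul_le_of_re_eq_one (Y : Matrix m n ℂ) (s : ℝ) {z : ℂ} (hz : z.re = 1)
    {X : Matrix m n ℂ} {K : ℝ} (hX : hsNormSq X ≤ K) :
    ‖(dualFamily Y s z * X).trace‖ ≤ √(hsNormSq (mcpow (Yᴴ * Y) (1 / (2 * s) : ℝ)) * K) := by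
  refine norm_trace_mul_le (le_of_eq ?_) hX
  rw [dualFamily, hsNormSq_mcpow_mul_conjTranspose, sub_add_cancel]
  refine hsNormSq_mcpow_congr (Matrix.posSemidef_conjTranspose_mul_self Y) ?_
  simp only [Complex.sub_re, Complex.div_ofReal_re, Complex.ofReal_re, hz, Complex.re_ofNat]
  ring

lemma IsStripAdmissible.dualFamily (Y : Matrix n n ℂ) (s : ℝ) :
    IsStripAdmissible fun z ↦ dualFamily Y s z := by
  have hexp (z : ℂ) : (2 - z) / (2 * s : ℝ) - 1 / 2 =
      (-(1 / (2 * s)) : ℝ) * z + (2 / (2 * s : ℝ) - 1 / 2) := by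
    push_cast
    ring
  simp only [_root_.dualFamily, hexp]
  exact (mcpow (Matrix.posSemidef_conjTranspose_mul_self Y) _ _).mul (const _)

lemma le_of_le_rpow_one_sub_mul_rpow {T B s : ℝ} (hB : 0 ≤ B) (hs : 0 < s)
    (h : T ≤ T ^ (1 - s) * B ^ s) : T ≤ B := by
  by_contra! hlt
  have hT : 0 < T := hB.trans_lt hlt
  refine h.not_gt ?_
  calc
    T ^ (1 - s) * B ^ s < T ^ (1 - s) * T ^ s := by gcongr
    _ = T := by rw [← Real.rpow_add hT, sub_add_cancel, Real.rpow_one]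

lemma le_of_le_sqrt_mul {T K : ℝ} (hK : 0 ≤ K) (h : T ≤ √(T * K)) : T ≤ K := by
  by_contra! hlt
  have hT : 0 < T := hK.trans_lt hlt
  exact h.not_gt ((Real.sqrt_lt' hT).mpr (by nlinarith))

/-- A form of Stein interpolation between the operator norm and the Hilbert–Schmidt norm. -/
theorem trace_mpow_le_of_isStripAdmissible {G : ℂ → Matrix n n ℂ} (hG : IsStripAdmissible G)
    (hleft : ∀ z : ℂ, z.re = 0 → ‖G z‖ ≤ 1) {K : ℝ}
    (hright : ∀ z : ℂ, z.re = 1 → hsNormSq (G z) ≤ K) {s : ℝ} (hs : s ∈ Set.Ioc 0 1) :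
    (mpow ((G s)ᴴ * G s) (1 / s)).trace ≤ K := by
  have hM := Matrix.posSemidef_conjTranspose_mul_self (G s)
  set T := hsNormSq (mcpow ((G s)ᴴ * G s) (1 / (2 * s) : ℝ))
  have htrace : (mpow ((G s)ᴴ * G s) (1 / s)).trace = T := by
    rw [mpow_eq_mcpow hM, ← trace_mcpow_two_mul_re hM, Complex.ofReal_re]
    congr 3
    field_simp
  have hpair : IsStripAdmissible fun z ↦ (dualFamily (G s) s z * G z).trace :=
    ((IsStripAdmissible.dualFamily (G s) s).mul hG).matrix_trace
  have hthree := hpair.norm_le_rpow_mul_rpow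
    (fun z hz ↦ norm_trace_dualFamily_mul_le_of_re_eq_zero (G s) s hz (hleft z hz))
    (fun z hz ↦ norm_trace_dualFamily_mul_le_of_re_eq_one (G s) s hz (hright z hz))
    (Set.Ioc_subset_Icc_self hs)
  rw [trace_dualFamily_mul_self _ hs.1.ne', Complex.norm_real,
    Real.norm_of_nonneg (hsNormSq_nonneg _)] at hthree
  have hK : 0 ≤ K := (hsNormSq_nonneg _).trans (hright 1 Complex.one_re)
  rw [htrace, Complex.real_le_real]
  exact le_of_le_sqrt_mul hK (le_of_le_rpow_one_sub_mul_rpow (Real.sqrt_nonneg _) hs.1 hthree)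

end Interpolation

section PartialTrace

variable {a b c m n : Type*}

/-- The partial trace over the first tensor factor. -/
def traceLeft [Fintype m] {R : Type*} [AddCommMonoid R] (P : Matrix (m × n) (m × n) R) :
    Matrix n n R :=
  ∑ i, P.submatrix (Prod.mk i) (Prod.mk i)

/-- The partial trace over the second of three tensor factors. -/
def traceMiddle [Fintype b] {R : Type*} [AddCommMonoid R] (P : Matrix (a × b × c) (a × b × c) R) :
    Matrix (a × c) (a × c) R :=
  ∑ l, P.submatrix (fun p ↦ (p.1, l, p.2)) fun p ↦ (p.1, l, p.2)

/-- The operator `Q` on the outer two factors of `a × b × c`, extended by the identity on the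
middle factor. -/
def extendMiddle (b : Type*) [DecidableEq b] {R : Type*} [MulZeroOneClass R]
    (Q : Matrix (a × c) (a × c) R) : Matrix (a × b × c) (a × b × c) R :=
  ((1 : Matrix b b R) ⊗ₖ Q).submatrix (fun x ↦ (x.2.1, x.1, x.2.2)) fun x ↦ (x.2.1, x.1, x.2.2)

lemma trace_traceLeft [Fintype m] [Fintype n] {R : Type*} [AddCommMonoid R]
    (P : Matrix (m × n) (m × n) R) : (traceLeft P).trace = P.trace := by
  rw [traceLeft, Matrix.trace_sum]
  simp [Matrix.trace, Fintype.sum_prod_type]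

lemma traceLeft_traceMiddle [Fintype a] [Fintype b] {R : Type*} [AddCommMonoid R]
    (P : Matrix (a × b × c) (a × b × c) R) :
    traceLeft (traceMiddle P) = traceLeft (traceLeft P) := by
  ext j k
  simp only [traceLeft, traceMiddle, Matrix.sum_apply, Matrix.submatrix_apply]
  exact Finset.sum_comm

lemma traceLeft_mul_one_kronecker [Fintype m] [Fintype n] [DecidableEq m] {R : Type*}
    [CommSemiring R] (P : Matrix (m × n) (m × n) R) (X : Matrix n n R) :
    traceLeft (P * ((1 : Matrix m m R) ⊗ₖ X)) = traceLeft P * X := by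
  ext j k
  simp [traceLeft, Matrix.sum_apply, Matrix.mul_apply, Fintype.sum_prod_type, Matrix.one_apply,
    Finset.sum_mul, Finset.sum_comm (γ := n)]

lemma extendMiddle_mul [Fintype a] [Fintype b] [Fintype c] [DecidableEq b] {R : Type*}
    [CommSemiring R] (Q S : Matrix (a × c) (a × c) R) :
    extendMiddle b Q * extendMiddle b S = extendMiddle b (Q * S) := by
  ext x y
  simp [extendMiddle, Matrix.mul_apply, Fintype.sum_prod_type, Matrix.one_apply]

lemma extendMiddle_one_kronecker [DecidableEq a] [DecidableEq b] {R : Type*} [CommSemiring R]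
    (X : Matrix c c R) : extendMiddle b ((1 : Matrix a a R) ⊗ₖ X) =
      (1 : Matrix a a R) ⊗ₖ ((1 : Matrix b b R) ⊗ₖ X) := by
  ext x y
  simp only [extendMiddle, Matrix.submatrix_apply, Matrix.kronecker_apply]
  exact mul_left_comm _ _ _

lemma traceLeft_extendMiddle [Fintype a] [DecidableEq b] {R : Type*} [NonAssocSemiring R]
    (Q : Matrix (a × c) (a × c) R) :
    traceLeft (extendMiddle b Q) = (1 : Matrix b b R) ⊗ₖ traceLeft Q := by
  ext x y
  simp [traceLeft, extendMiddle, Matrix.sum_apply, Finset.mul_sum]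

lemma trace_one_kronecker_mul_extendMiddle [Fintype a] [Fintype b] [Fintype c] [DecidableEq a]
    [DecidableEq b] {R : Type*} [CommSemiring R] (P : Matrix (b × c) (b × c) R)
    (Q : Matrix (a × c) (a × c) R) :
    (((1 : Matrix a a R) ⊗ₖ P) * extendMiddle b Q).trace = (traceLeft P * traceLeft Q).trace := by
  rw [Matrix.trace_mul_comm, ← trace_traceLeft, traceLeft_mul_one_kronecker,
    traceLeft_extendMiddle, Matrix.trace_mul_comm, ← trace_traceLeft, traceLeft_mul_one_kronecker]

lemma trace_one_kronecker_mul_mul_extendMiddle_mul [Fintype a] [Fintype b] [Fintype c]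
    [DecidableEq a] [DecidableEq b] {R : Type*} [CommSemiring R] (P : Matrix (b × c) (b × c) R)
    (Q : Matrix (a × c) (a × c) R) (X Y : Matrix c c R) :
    (((1 : Matrix a a R) ⊗ₖ P) * ((1 : Matrix a a R) ⊗ₖ ((1 : Matrix b b R) ⊗ₖ X)) *
      (extendMiddle b Q * ((1 : Matrix a a R) ⊗ₖ ((1 : Matrix b b R) ⊗ₖ Y)))).trace =
      (traceLeft P * X * (traceLeft Q * Y)).trace := by
  rw [← Matrix.mul_kronecker_mul, one_mul, ← extendMiddle_one_kronecker, extendMiddle_mul,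
    trace_one_kronecker_mul_extendMiddle, traceLeft_mul_one_kronecker, traceLeft_mul_one_kronecker]

lemma posSemidef_traceLeft [Fintype m] {P : Matrix (m × n) (m × n) ℂ} (hP : P.PosSemidef) :
    (traceLeft P).PosSemidef :=
  Matrix.posSemidef_sum _ fun i _ ↦ hP.submatrix (Prod.mk i)

lemma posSemidef_traceMiddle [Fintype b] {P : Matrix (a × b × c) (a × b × c) ℂ}
    (hP : P.PosSemidef) : (traceMiddle P).PosSemidef :=
  Matrix.posSemidef_sum _ fun _ _ ↦ hP.submatrix _

lemma posSemidef_extendMiddle [Finite a] [Finite b] [Finite c] [DecidableEq b]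
    {Q : Matrix (a × c) (a × c) ℂ} (hQ : Q.PosSemidef) : (extendMiddle b Q).PosSemidef := by
  cases nonempty_fintype b
  exact (Matrix.PosSemidef.one.kronecker hQ).submatrix _

/-- The embedding of the operators on a tensor factor as `X ↦ 1 ⊗ X`. -/
def oneKroneckerHom (m n : Type*) [Fintype m] [Fintype n] [DecidableEq m] [DecidableEq n] :
    Matrix n n ℂ →⋆ₐ[ℂ] Matrix (m × n) (m × n) ℂ where
  toFun X := (1 : Matrix m m ℂ) ⊗ₖ X
  map_one' := Matrix.one_kronecker_one
  map_mul' X Y := by rw [← Matrix.mul_kronecker_mul, mul_one]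
  map_zero' := Matrix.kronecker_zero _
  map_add' := Matrix.kronecker_add _
  commutes' r := by
    simp only [Algebra.algebraMap_eq_smul_one, Matrix.kronecker_smul, Matrix.one_kronecker_one]
  map_star' X := by
    simp [Matrix.star_eq_conjTranspose, Matrix.conjTranspose_kronecker]

end PartialTrace

section InterpolatingFamily

variable {n : Type*} [Fintype n] [DecidableEq n] {A B C : Matrix n n ℂ}

/-- The analytic family `B ^ (z / 2) C ^ (-z / 2) A ^ (z / 2)` of the interpolation argument, for
`A`, `B`, `C` the operators `ρ_AC`, `ρ_BC`, `ρ_C`. -/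
noncomputable def reductionFamily (A B C : Matrix n n ℂ) (z : ℂ) : Matrix n n ℂ :=
  mcpow B (z / 2) * mcpow C (-z / 2) * mcpow A (z / 2)

lemma IsStripAdmissible.reductionFamily (hA : A.PosSemidef) (hB : B.PosSemidef)
    (hC : C.PosSemidef) : IsStripAdmissible (reductionFamily A B C) := by
  have hpos {M : Matrix n n ℂ} (hM : M.PosSemidef) :
      IsStripAdmissible fun z ↦ _root_.mcpow M (z / 2) := by
    convert mcpow hM (1 / 2) 0 using 3
    push_cast
    ring
  have hneg : IsStripAdmissible fun z ↦ _root_.mcpow C (-z / 2) := by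
    convert mcpow hC (-1 / 2) 0 using 3
    push_cast
    ring
  exact ((hpos hB).mul hneg).mul (hpos hA)

lemma norm_reductionFamily_le_one (hA : A.PosSemidef) (hB : B.PosSemidef) (hC : C.PosSemidef)
    {z : ℂ} (hz : z.re = 0) : ‖reductionFamily A B C z‖ ≤ 1 := by
  have h (w : ℂ) (hw : w.re = 0) : (w / 2).re = 0 := by simp [hw]
  have hBC := norm_mul_le_of_le (norm_mcpow_le_one hB (h z hz))
    (norm_mcpow_le_one hC (h (-z) (by simp [hz])))
  exact (norm_mul_le_of_le hBC (norm_mcpow_le_one hA (h z hz))).trans_eq (by norm_num)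

lemma conjTranspose_reductionFamily (hA : A.PosSemidef) (hB : B.PosSemidef) (hC : C.PosSemidef)
    (z : ℂ) : (reductionFamily A B C z)ᴴ =
      mcpow A (star z / 2) * (mcpow C (-star z / 2) * mcpow B (star z / 2)) := by
  simp [reductionFamily, Matrix.conjTranspose_mul, conjTranspose_mcpow, hA, hB, hC]

lemma conjTranspose_mul_reductionFamily (hA : A.PosSemidef) (hB : B.PosSemidef)
    (hC : C.PosSemidef) (z : ℂ) :
    (reductionFamily A B C z)ᴴ * reductionFamily A B C z =
      mcpow A (star z / 2) * mcpow C (-star z / 2) * mcpow B z.re * mcpow C (-z / 2) *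
        mcpow A (z / 2) := by
  have hexp : ((z.re : ℝ) : ℂ) = star z / 2 + z / 2 := by
    rw [Complex.re_eq_add_conj, add_comm, add_div]
    rfl
  rw [conjTranspose_reductionFamily hA hB hC, reductionFamily, hexp, mcpow_add]
  simp only [Matrix.mul_assoc]

lemma conjTranspose_mul_reductionFamily_ofReal (hA : A.PosSemidef) (hB : B.PosSemidef)
    (hC : C.PosSemidef) (s : ℝ) :
    (reductionFamily A B C s)ᴴ * reductionFamily A B C s =
      mpow A (s / 2) * mpow C (-s / 2) * mpow B s * mpow C (-s / 2) * mpow A (s / 2) := by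
  rw [conjTranspose_mul_reductionFamily hA hB hC, mpow_eq_mcpow hA, mpow_eq_mcpow hB,
    mpow_eq_mcpow hC]
  simp

variable {a b c : Type*} [Fintype a] [Fintype b] [Fintype c] [DecidableEq a] [DecidableEq b]
  [DecidableEq c] {P : Matrix (b × c) (b × c) ℂ} {Q : Matrix (a × c) (a × c) ℂ}

lemma mcpow_one_kronecker (hA : A.IsHermitian) (z : ℂ) :
    mcpow ((1 : Matrix a a ℂ) ⊗ₖ A) z = (1 : Matrix a a ℂ) ⊗ₖ mcpow A z :=
  mcpow_map (oneKroneckerHom a n) hA z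

lemma hsNormSq_reductionFamily (hP : P.PosSemidef) (hQ : Q.PosSemidef)
    (hPQ : traceLeft P = traceLeft Q) {z : ℂ} (hz : z.re = 1) :
    (hsNormSq (reductionFamily (extendMiddle b Q) ((1 : Matrix a a ℂ) ⊗ₖ P)
      ((1 : Matrix a a ℂ) ⊗ₖ ((1 : Matrix b b ℂ) ⊗ₖ traceLeft P)) z) : ℂ) =
        (traceLeft P).trace := by
  have hR := posSemidef_traceLeft hP
  have hBR := (Matrix.PosSemidef.one (n := b) (R := ℂ)).kronecker hR
  have hA := posSemidef_extendMiddle (b := b) hQ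
  have hB := (Matrix.PosSemidef.one (n := a) (R := ℂ)).kronecker hP
  have hC := (Matrix.PosSemidef.one (n := a) (R := ℂ)).kronecker hBR
  have hsum : z / 2 + star z / 2 = 1 := by
    rw [← add_div, Complex.star_def, Complex.add_conj, hz]
    norm_num
  rw [← trace_conjTranspose_mul_self, conjTranspose_mul_reductionFamily hA hB hC, hz,
    Complex.ofReal_one, mcpow_one hB.isHermitian]
  set R := traceLeft P
  set A := extendMiddle b Q
  set B := (1 : Matrix a a ℂ) ⊗ₖ P
  set C := (1 : Matrix a a ℂ) ⊗ₖ ((1 : Matrix b b ℂ) ⊗ₖ R)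
  calc
    (mcpow A (star z / 2) * mcpow C (-star z / 2) * B * mcpow C (-z / 2) *
          mcpow A (z / 2)).trace =
        (B * mcpow C (-z / 2) *
          (mcpow A (z / 2) * mcpow A (star z / 2) * mcpow C (-star z / 2))).trace := by
      rw [Matrix.mul_assoc, Matrix.mul_assoc, Matrix.trace_mul_comm]
      simp only [Matrix.mul_assoc]
    _ = (B * mcpow C (-z / 2) * (A * mcpow C (-star z / 2))).trace := by
      rw [← mcpow_add, hsum, mcpow_one hA.isHermitian]
    _ = (R * mcpow R (-z / 2) * (R * mcpow R (-star z / 2))).trace := by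
      simp only [C, mcpow_one_kronecker hBR.isHermitian, mcpow_one_kronecker hR.isHermitian]
      rw [trace_one_kronecker_mul_mul_extendMiddle_mul, ← hPQ]
    _ = (mcpow R (1 + -z / 2 + (1 + -star z / 2))).trace := by
      simp only [mcpow_add, mcpow_one hR.isHermitian]
    _ = R.trace := by
      rw [show 1 + -z / 2 + (1 + -star z / 2) = 1 by linear_combination -hsum,
        mcpow_one hR.isHermitian]

end InterpolatingFamily

section Marginals

variable {dA dB dC : ℕ} (ρ : Matrix (Fin dA × Fin dB × Fin dC) (Fin dA × Fin dB × Fin dC) ℂ)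

lemma redAC_eq_extendMiddle : redAC ρ = extendMiddle (Fin dB) (traceMiddle ρ) := by
  ext x y
  simp [redAC, extendMiddle, traceMiddle, Matrix.sum_apply, Matrix.one_apply]

lemma redBC_eq_one_kronecker : redBC ρ = (1 : Matrix (Fin dA) (Fin dA) ℂ) ⊗ₖ traceLeft ρ := by
  ext x y
  simp [redBC, traceLeft, Matrix.sum_apply, Matrix.one_apply]

lemma redC_eq_one_kronecker : redC ρ =
    (1 : Matrix (Fin dA) (Fin dA) ℂ) ⊗ₖ
      ((1 : Matrix (Fin dB) (Fin dB) ℂ) ⊗ₖ traceLeft (traceLeft ρ)) := by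
  ext x y
  simp only [redC, traceLeft, Matrix.kroneckerMap_apply, Matrix.one_apply, Matrix.sum_apply,
    Matrix.submatrix_apply, mul_assoc]
  rw [Finset.sum_comm]

end Marginals

theorem stmt_5_general {a b c : Type*} [Fintype a] [Fintype b] [Fintype c] [DecidableEq a]
    [DecidableEq b] [DecidableEq c] {P : Matrix (b × c) (b × c) ℂ} {Q : Matrix (a × c) (a × c) ℂ}
    (hP : P.PosSemidef) (hQ : Q.PosSemidef) (hPQ : traceLeft P = traceLeft Q) {α : ℝ}
    (hα : α ∈ Set.Ico 0 1) :
    (mpow (mpow (extendMiddle b Q) ((1 - α) / 2) *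
      mpow ((1 : Matrix a a ℂ) ⊗ₖ ((1 : Matrix b b ℂ) ⊗ₖ traceLeft P)) ((α - 1) / 2) *
      mpow ((1 : Matrix a a ℂ) ⊗ₖ P) (1 - α) *
      mpow ((1 : Matrix a a ℂ) ⊗ₖ ((1 : Matrix b b ℂ) ⊗ₖ traceLeft P)) ((α - 1) / 2) *
      mpow (extendMiddle b Q) ((1 - α) / 2)) (1 / (1 - α))).trace ≤ P.trace := by
  have hA := posSemidef_extendMiddle (b := b) hQ
  have hB := (Matrix.PosSemidef.one (n := a) (R := ℂ)).kronecker hP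
  have hC := (Matrix.PosSemidef.one (n := a) (R := ℂ)).kronecker
    ((Matrix.PosSemidef.one (n := b) (R := ℂ)).kronecker (posSemidef_traceLeft hP))
  have hHS {z : ℂ} (hz : z.re = 1) := hsNormSq_reductionFamily hP hQ hPQ hz
  have hinterp := trace_mpow_le_of_isStripAdmissible
    (IsStripAdmissible.reductionFamily hA hB hC)
    (fun z hz ↦ norm_reductionFamily_le_one hA hB hC hz)
    (fun z hz ↦ Complex.ofReal_injective ((hHS hz).trans (hHS Complex.one_re).symm) |>.le)
    (s := 1 - α) ⟨sub_pos.mpr hα.2, sub_le_self 1 hα.1⟩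
  rwa [conjTranspose_mul_reductionFamily_ofReal hA hB hC, neg_sub, hHS Complex.one_re,
    trace_traceLeft] at hinterp

theorem stmt_5 {dA dB dC : ℕ}
    (ρ : Matrix (Fin dA × Fin dB × Fin dC) (Fin dA × Fin dB × Fin dC) ℂ)
    (hρ : ρ.PosSemidef) (hρ1 : ρ.trace = 1)
    (α : ℝ) (hα : α ∈ Set.Ioo (0:ℝ) 1) :
    (mpow (mpow (redAC ρ) ((1 - α)/2) * mpow (redC ρ) ((α - 1)/2) *
        mpow (redBC ρ) (1 - α) * mpow (redC ρ) ((α - 1)/2) * mpow (redAC ρ) ((1 - α)/2)) (1/(1 - α))).trace ≤ 1 := by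
  rw [redAC_eq_extendMiddle, redBC_eq_one_kronecker, redC_eq_one_kronecker]
  refine (stmt_5_general (posSemidef_traceLeft hρ) (posSemidef_traceMiddle hρ)
    (traceLeft_traceMiddle ρ).symm ⟨hα.1.le, hα.2⟩).trans_eq ?_
  rw [trace_traceLeft, hρ1]
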